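/- (Differentiation of the kernel function, Eq. (12)) For every h₀ > 0, the kernel function Γ is differentiable at h₀ with derivative Γ'(h₀) = ∫₀¹ 2πR·N₀·K·[ 2h₀·(η₁ + P₀(R,h₀)·(η₀ − η₁)) + (180·b·R/π)·(η₀ − η₁)·P₀(R,h₀)·(1 − P₀(R,h₀)) ] dR. -/

import Mathlib

open Real MeasureTheory intervalIntegral

/-!
The elevation angle depends on the altitude with slope `(180 / π) * R / (R ^ 2 + h ^ 2)`, which is
unbounded near the origin. In the path loss this singular factor meets the squared distance
`R ^ 2 + h ^ 2`, and the two cancel. Hence the integrand and its derivative in `h` are both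
polynomials in `R`, `h` and the line-of-sight probability. Since this probability, a logistic
function of the angle, stays in `[0, 1]`, compactness bounds the derivative near `h₀` uniformly in
`R`, and one may differentiate under the integral sign.
-/

section ParametricIntegral

variable {X E : Type*} [NormedAddCommGroup E] {S : Set X} {p : ℝ → ℝ → X} {a b : ℝ}

lemma exists_norm_le_of_mem_isCompact [TopologicalSpace X] (hS : IsCompact S)
    {Φ : ℝ × ℝ × X → E} (hΦ : Continuous Φ)
    (hp : ∀ t ∈ Set.uIoc a b, ∀ x, p t x ∈ S) (x₀ r : ℝ) :
    ∃ C, ∀ t ∈ Set.uIoc a b, ∀ x ∈ Metric.closedBall x₀ r, ‖Φ (t, x, p t x)‖ ≤ C := by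
  have hcompact := (isCompact_uIcc (a := a) (b := b)).prod ((isCompact_closedBall x₀ r).prod hS)
  obtain ⟨C, hC⟩ := hcompact.exists_bound_of_continuousOn hΦ.continuousOn
  exact ⟨C, fun t ht x hx => hC _ ⟨Set.uIoc_subset_uIcc ht, hx, hp t ht x⟩⟩

variable [TopologicalSpace X] [NormedSpace ℝ E] {μ : Measure ℝ} [IsLocallyFiniteMeasure μ]

theorem hasDerivAt_integral_of_mem_isCompact (hS : IsCompact S) {Φ Ψ : ℝ × ℝ × X → E}
    (hΦ : Continuous Φ) (hΨ : Continuous Ψ)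
    (hp_meas : ∀ x, AEStronglyMeasurable (fun t => p t x) (μ.restrict (Set.uIoc a b)))
    (hp : ∀ t ∈ Set.uIoc a b, ∀ x, p t x ∈ S)
    (hderiv : ∀ t ∈ Set.uIoc a b, ∀ x,
      HasDerivAt (fun y => Φ (t, y, p t y)) (Ψ (t, x, p t x)) x) (x₀ : ℝ) :
    HasDerivAt (fun x => ∫ t in a..b, Φ (t, x, p t x) ∂μ)
      (∫ t in a..b, Ψ (t, x₀, p t x₀) ∂μ) x₀ := by
  have measurable_comp {Θ : ℝ × ℝ × X → E} (hΘ : Continuous Θ) (x : ℝ) :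
      AEStronglyMeasurable (fun t => Θ (t, x, p t x)) (μ.restrict (Set.uIoc a b)) :=
    hΘ.comp_aestronglyMeasurable
      (aestronglyMeasurable_id.prodMk (aestronglyMeasurable_const.prodMk (hp_meas x)))
  obtain ⟨C, hC⟩ := exists_norm_le_of_mem_isCompact hS hΦ hp x₀ 1
  obtain ⟨C', hC'⟩ := exists_norm_le_of_mem_isCompact hS hΨ hp x₀ 1
  have integrable_Φ : IntervalIntegrable (fun t => Φ (t, x₀, p t x₀)) μ a b := by
    refine (intervalIntegrable_const (c := C)).mono_fun' (measurable_comp hΦ x₀) ?_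
    exact ae_restrict_of_forall_mem measurableSet_uIoc fun t ht =>
      hC t ht x₀ (Metric.mem_closedBall_self zero_le_one)
  exact (intervalIntegral.hasDerivAt_integral_of_dominated_loc_of_deriv_le
    (Metric.closedBall_mem_nhds x₀ one_pos) (.of_forall (measurable_comp hΦ)) integrable_Φ
    (measurable_comp hΨ x₀) (.of_forall hC') intervalIntegrable_const
    (.of_forall fun t ht x _ => hderiv t ht x)).2

end ParametricIntegral

/-- The elevation angle `θ`, in degrees, of a transmitter at altitude `h` seen from ground distance
`R`. Division by zero makes it `0`, not `90`, at `R = 0`. -/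
noncomputable def elevationAngle (R h : ℝ) : ℝ := 180 / π * arctan (h / R)

/-- The line-of-sight probability `P₀`, for the environment parameters `a` and `b`. -/
noncomputable def losProbability (a b R h : ℝ) : ℝ :=
  1 / (1 + a * exp (-b * (elevationAngle R h - a)))

/-- The average path loss `L̄`, for the path-loss constant `K` and the excess losses `η₀` and `η₁`
of line-of-sight and non-line-of-sight links. -/
noncomputable def meanPathLoss (a b η₀ η₁ K R h : ℝ) : ℝ :=
  K * (R ^ 2 + h ^ 2) * (η₁ + losProbability a b R h * (η₀ - η₁))

/-- The kernel function `Γ` of transmit power, for noise power `N₀`, as a function of the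
altitude `x`; the integral over the unit disc is written in polar coordinates. -/
noncomputable def kernelFunction (a b η₀ η₁ K N₀ x : ℝ) : ℝ :=
  ∫ R in (0 : ℝ)..1, 2 * π * R * meanPathLoss a b η₀ η₁ K R x * N₀

lemma hasDerivAt_elevationAngle {R : ℝ} (hR : R ≠ 0) (h : ℝ) :
    HasDerivAt (elevationAngle R) (180 / π * (R / (R ^ 2 + h ^ 2))) h := by
  refine (((hasDerivAt_id h).div_const R).arctan.const_mul (180 / π)).congr_deriv ?_
  have hsq : R ^ 2 + h ^ 2 ≠ 0 := by positivity
  simp only [id]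
  field_simp

lemma measurable_elevationAngle (h : ℝ) : Measurable fun R => elevationAngle R h := by
  unfold elevationAngle
  fun_prop

section LosProbability

variable {a : ℝ} (ha : 0 < a) (b : ℝ)
include ha

lemma losProbability_eq_sigmoid (R h : ℝ) :
    losProbability a b R h = sigmoid (b * (elevationAngle R h - a) - log a) := by
  rw [losProbability, sigmoid_def, one_div, neg_sub, exp_sub, exp_log ha, neg_mul, exp_neg,
    div_eq_mul_inv]

lemma losProbability_mem_Icc (R h : ℝ) : losProbability a b R h ∈ Set.Icc 0 1 := by
  rw [losProbability_eq_sigmoid ha]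
  exact ⟨sigmoid_nonneg _, sigmoid_le_one _⟩

lemma measurable_losProbability (h : ℝ) : Measurable fun R => losProbability a b R h := by
  simp only [losProbability_eq_sigmoid ha]
  exact continuous_sigmoid.measurable.comp
    ((((measurable_elevationAngle h).sub_const a).const_mul b).sub_const (log a))

lemma hasDerivAt_losProbability {R : ℝ} (hR : R ≠ 0) (h : ℝ) :
    HasDerivAt (losProbability a b R)
      (losProbability a b R h * (1 - losProbability a b R h) *
        (b * (180 / π * (R / (R ^ 2 + h ^ 2))))) h := by
  simp only [funext (losProbability_eq_sigmoid ha b R)]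
  exact (hasDerivAt_sigmoid _).comp h
    ((((hasDerivAt_elevationAngle hR h).sub_const a).const_mul b).sub_const (log a))

lemma hasDerivAt_meanPathLoss (η₀ η₁ K : ℝ) {R : ℝ} (hR : R ≠ 0) (h : ℝ) :
    HasDerivAt (meanPathLoss a b η₀ η₁ K R)
      (K * (2 * h * (η₁ + losProbability a b R h * (η₀ - η₁)) +
        180 * b * R / π * (η₀ - η₁) * losProbability a b R h *
          (1 - losProbability a b R h))) h := by
  have hdist : HasDerivAt (fun y => K * (R ^ 2 + y ^ 2)) (K * (2 * h)) h := by
    simpa using ((hasDerivAt_pow 2 h).const_add (R ^ 2)).const_mul K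
  have hgain := ((hasDerivAt_losProbability ha b hR h).mul_const (η₀ - η₁)).const_add η₁
  refine (hdist.mul hgain).congr_deriv ?_
  have hsq : R ^ 2 + h ^ 2 ≠ 0 := by positivity
  field_simp

theorem kernel_function_hasDerivAt_general (η₀ η₁ K N₀ h₀ : ℝ) :
    HasDerivAt (kernelFunction a b η₀ η₁ K N₀)
      (∫ R in (0 : ℝ)..1, 2 * π * R * N₀ * K *
        (2 * h₀ * (η₁ + losProbability a b R h₀ * (η₀ - η₁)) +
          180 * b * R / π * (η₀ - η₁) * losProbability a b R h₀ *
            (1 - losProbability a b R h₀))) h₀ := by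
  refine hasDerivAt_integral_of_mem_isCompact (μ := volume) isCompact_Icc
    (Φ := fun (R, h, p) => 2 * π * R * (K * (R ^ 2 + h ^ 2) * (η₁ + p * (η₀ - η₁))) * N₀)
    (Ψ := fun (R, h, p) => 2 * π * R * N₀ * K *
      (2 * h * (η₁ + p * (η₀ - η₁)) + 180 * b * R / π * (η₀ - η₁) * p * (1 - p)))
    (by fun_prop) (by fun_prop)
    (fun h => (measurable_losProbability ha b h).aestronglyMeasurable)
    (fun R _ => losProbability_mem_Icc ha b R) (fun R hR h => ?_) h₀
  rw [Set.uIoc_of_le zero_le_one] at hR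
  refine (((hasDerivAt_meanPathLoss ha b η₀ η₁ K hR.1.ne' h).const_mul (2 * π * R)).mul_const
    N₀).congr_deriv ?_
  ring

end LosProbability

/-- Eq. (12): For every `h₀ > 0`, the kernel function `Γ` is
differentiable at `h₀` with the stated integral derivative. -/
theorem kernel_function_hasDerivAt
    (a b η₀ η₁ K N₀ : ℝ) (ha : 0 < a) (hb : 0 < b) (hη₀ : 0 < η₀) (hη₁ : 0 < η₁)
    (hK : 0 < K) (hN₀ : 0 < N₀)
    (θ P₀ L : ℝ → ℝ → ℝ) (Γ : ℝ → ℝ)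
    (hθ : ∀ R h : ℝ, θ R h = (180 / π) * arctan (h / R))
    (hP₀ : ∀ R h : ℝ, P₀ R h = 1 / (1 + a * exp (-b * (θ R h - a))))
    (hL : ∀ R h : ℝ, L R h = K * (R ^ 2 + h ^ 2) * (η₁ + P₀ R h * (η₀ - η₁)))
    (hΓ : ∀ x : ℝ, Γ x = ∫ R in (0 : ℝ)..(1 : ℝ), 2 * π * R * L R x * N₀)
    (h₀ : ℝ) (hh₀ : 0 < h₀) :
    HasDerivAt Γ
      (∫ R in (0 : ℝ)..(1 : ℝ), 2 * π * R * N₀ * K *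
        (2 * h₀ * (η₁ + P₀ R h₀ * (η₀ - η₁)) +
          (180 * b * R / π) * (η₀ - η₁) * P₀ R h₀ * (1 - P₀ R h₀))) h₀ := by
  obtain rfl : θ = elevationAngle := funext₂ hθ
  obtain rfl : P₀ = losProbability a b := funext₂ hP₀
  obtain rfl : L = meanPathLoss a b η₀ η₁ K := funext₂ hL
  obtain rfl : Γ = kernelFunction a b η₀ η₁ K N₀ := funext hΓ
  exact kernel_function_hasDerivAt_general ha b η₀ η₁ K N₀ h₀
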